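/- For N = 2, the 8×8 R-matrix with entries given by R_{i₁,i₂,i₃}^{j₁,j₂,j₃} = δ_{i₂+i₃,j₂+j₃} (-1)^{(j₁-i₁)j₃} W_{p₁}(i₂-i₁)W_{p₂}(j₂-j₁)/(W_{p₃}(j₂-i₁)W_{p₄}(i₂-j₁)), expressed in the variables Y_k = y_k/(1+x_k), has determinant (Y₁ Y₂ (Y₃²+1)(Y₄²-1)/(Y₃²Y₄²))⁴. -/

import Mathlib

/-- The index splitting `{0,1,6,7} ∪ {2,3,4,5}`. -/
def splitEquiv : Fin 4 ⊕ Fin 4 ≃ Fin 8 where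
  toFun := Sum.elim ![0, 1, 6, 7] ![2, 3, 4, 5]
  invFun := ![.inl 0, .inl 1, .inr 0, .inr 1, .inr 2, .inr 3, .inl 2, .inl 3]
  left_inv := by decide
  right_inv := by decide

theorem det_split (M : Matrix (Fin 8) (Fin 8) ℂ) (A B : Matrix (Fin 4) (Fin 4) ℂ)
    (h : M.submatrix splitEquiv splitEquiv = Matrix.fromBlocks A 0 0 B) :
    M.det = A.det * B.det := by
  rw [← Matrix.det_submatrix_equiv_self splitEquiv M, h, Matrix.det_fromBlocks_zero₂₁]

theorem det_four (M : Matrix (Fin 4) (Fin 4) ℂ) : M.det =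
    M 0 0 * (M 1 1 * (M 2 2 * M 3 3 - M 2 3 * M 3 2) - M 1 2 * (M 2 1 * M 3 3 - M 2 3 * M 3 1)
      + M 1 3 * (M 2 1 * M 3 2 - M 2 2 * M 3 1))
    - M 0 1 * (M 1 0 * (M 2 2 * M 3 3 - M 2 3 * M 3 2) - M 1 2 * (M 2 0 * M 3 3 - M 2 3 * M 3 0)
      + M 1 3 * (M 2 0 * M 3 2 - M 2 2 * M 3 0))
    + M 0 2 * (M 1 0 * (M 2 1 * M 3 3 - M 2 3 * M 3 1) - M 1 1 * (M 2 0 * M 3 3 - M 2 3 * M 3 0)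
      + M 1 3 * (M 2 0 * M 3 1 - M 2 1 * M 3 0))
    - M 0 3 * (M 1 0 * (M 2 1 * M 3 2 - M 2 2 * M 3 1) - M 1 1 * (M 2 0 * M 3 2 - M 2 2 * M 3 0)
      + M 1 2 * (M 2 0 * M 3 1 - M 2 1 * M 3 0)) := by
  simp [Matrix.det_succ_row_zero, Fin.sum_univ_succ, Fin.succAbove]
  ring

/-- For `N = 2`: with Fermat points `(x_k, y_k)`, `x_k² + y_k² = 1`, `x_k ≠ -1`,
subject to `x₁x₂ = -x₃x₄`, set `Y_k = y_k/(1+x_k)` and `Z_{ik} = Y_i/Y_k`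
(`ik ∈ {13,14,23,24}`), `Z₁₂ = Y₁Y₂`, `Z₃₄ = 1/(Y₃Y₄)`. The explicit 8×8 R-matrix
has determinant `(Y₁Y₂(Y₃²+1)(Y₄²-1)/(Y₃²Y₄²))⁴`. -/
theorem det_R_N2 (x y : Fin 4 → ℂ)
    (hferm : ∀ k, (x k) ^ 2 + (y k) ^ 2 = 1)
    (hx : ∀ k, x k ≠ -1) (hy : ∀ k, y k ≠ 0)
    (hcon : x 0 * x 1 = -(x 2 * x 3))
    (Y : Fin 4 → ℂ) (hY : ∀ k, Y k = y k / (1 + x k))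
    (Z13 Z14 Z23 Z24 Z12 Z34 : ℂ)
    (h13 : Z13 = Y 0 / Y 2) (h14 : Z14 = Y 0 / Y 3)
    (h23 : Z23 = Y 1 / Y 2) (h24 : Z24 = Y 1 / Y 3)
    (h12 : Z12 = Y 0 * Y 1) (h34 : Z34 = 1 / (Y 2 * Y 3)) :
    Matrix.det
      !![(1 : ℂ), Z24, 0, 0, 0, 0, Z23, -Z34;
         Z13, Z13 * Z24, 0, 0, 0, 0, -Z12, Z14;
         0, 0, Z13 * Z24, Z13, Z14, -Z12, 0, 0;
         0, 0, Z24, 1, -Z34, Z23, 0, 0;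
         0, 0, Z23, Z34, 1, -Z24, 0, 0;
         0, 0, Z12, Z14, -Z13, Z13 * Z24, 0, 0;
         Z14, Z12, 0, 0, 0, 0, Z13 * Z24, -Z13;
         Z34, Z23, 0, 0, 0, 0, -Z24, 1]
      = (Y 0 * Y 1 * ((Y 2) ^ 2 + 1) * ((Y 3) ^ 2 - 1) / ((Y 2) ^ 2 * (Y 3) ^ 2)) ^ 4 := by
  have hne : ∀ k, Y k ≠ 0 := fun k => by
    rw [hY k]
    refine div_ne_zero (hy k) fun h => hx k ?_
    linear_combination h
  have h2 := hne 2
  have h3 := hne 3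
  rw [det_split _ !![1, Z24, Z23, -Z34; Z13, Z13 * Z24, -Z12, Z14;
        Z14, Z12, Z13 * Z24, -Z13; Z34, Z23, -Z24, 1]
      !![Z13 * Z24, Z13, Z14, -Z12; Z24, 1, -Z34, Z23;
        Z23, Z34, 1, -Z24; Z12, Z14, -Z13, Z13 * Z24]
      (by
        ext i j
        rcases i with i | i <;> rcases j with j | j <;> fin_cases i <;> fin_cases j <;> rfl),
    det_four, det_four]
  simp only [Matrix.of_apply, Matrix.cons_val]
  subst h13 h14 h23 h24 h12 h34
  generalize Y 0 = a
  generalize Y 1 = b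
  generalize Y 2 = c at *
  generalize Y 3 = d at *
  field_simp
  ring
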